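/- For a feasible point x̄ of the MPVC the following are equivalent: (i) x̄ is linearized B-stationary; (ii) x̄ is A_α-stationary for all α ∈ {0,1}^p; (iii) x̄ is C_d-stationary for all d ∈ [0,1]^p; (iv) x̄ is P_α-stationary for all α ∈ {0,1}^p. -/

import Mathlib

/-!
The linearized cone at `xb` is a finite union of polyhedral cones, one for each `α ∈ {0,1}^p`: on
`I^{00}`, branch `α` requires `⟪∇H_i, v⟫ = 0` where `α i = 0`, and `⟪∇G_i, v⟫ ≤ 0 ≤ ⟪∇H_i, v⟫` where
`α i = 1`. By Farkas' lemma (`farkas_inner`), `-∇f` is polar to branch `α` if and only if `xb` is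
`A_α`-stationary. This is the equivalence of linearized B-stationarity with `A_α`-stationarity for
all `α` (`aStat_of_linB`, `linB_of_aStat`). For binary `α`, `C_α`-stationarity implies
`P_α`-stationarity, which implies `A_α`-stationarity, directly from the definitions.

The substantial step is `cStat_of_aStat`: `A_α` for all `α` implies `C_d` for every `d ∈ [0,1]^p`.
Choose `A_β`-multipliers at each vertex `β` of the cube and interpolate them multilinearly to
multipliers `(λ, η, μ, ν)(t)`, `t ∈ [0,1]^p`. The weak multipliers form a convex set, so all of these
are weak multipliers. For `i ∈ I^{00}` put `ψ_i = min (μ_i, (1 - d_i) μ_i + d_i ν_i)`. On the face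
`t_i = 0` one has `μ_i = 0`, so `ψ_i ≤ 0`; on the face `t_i = 1` one has `μ_i, ν_i ≥ 0`, so
`ψ_i ≥ 0`. The Poincaré–Miranda theorem (`poincare_miranda`) gives a common zero of the `ψ_i`, and
`ψ_i = 0` is the complementarity condition of `C_d`-stationarity.

Poincaré–Miranda is derived from Scarf's combinatorial lemma. A set `σ` is dominant for a family of
linear orders indexed by `I` if no element is above the minimum of `σ` in every order. Call a
dominant set of size `|I|` a room, and a dominant set of size `|I| - 1` that carries every colour but
a fixed `i₀` a door. Every door lies in exactly two rooms, except for a single boundary door, which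
lies in one (`scarf_rooms_card`), while a room that is not fully coloured contains zero or two doors.
Counting incidences modulo two yields a fully coloured room (`scarf_colorful`). For the grid points
of a simplex ordered by their coordinates, the points of such a room are close together and almost
vanish in the coordinates whose colour is absent (`grid_colors`); refining the grid gives
approximate zeros, and compactness an exact one.
-/

open Set Filter RealInnerProductSpace

noncomputable section

abbrev Rn (n : ℕ) := EuclideanSpace ℝ (Fin n)

/-- The tangent cone (Bouligand) to a set `F` at a point `x`. -/
def tangentCone' {n : ℕ} (F : Set (Rn n)) (x : Rn n) : Set (Rn n) :=
  {d | ∃ (xk : ℕ → Rn n) (tk : ℕ → ℝ),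
    (∀ k, xk k ∈ F) ∧ (∀ k, 0 < tk k) ∧
    Tendsto xk atTop (nhds x) ∧ Tendsto tk atTop (nhds 0) ∧
    Tendsto (fun k => (tk k)⁻¹ • (xk k - x)) atTop (nhds d)}

/-- The polar cone of a set. -/
def polarCone {n : ℕ} (C : Set (Rn n)) : Set (Rn n) :=
  {d | ∀ y ∈ C, ⟪d, y⟫ ≤ 0}

/-- α ∈ {0,1}^p -/
def IsBinaryVec {p : ℕ} (α : Fin p → ℝ) : Prop := ∀ i, α i = 0 ∨ α i = 1

/-- d ∈ [0,1]^p -/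
def IsUnitIntervalVec {p : ℕ} (d : Fin p → ℝ) : Prop := ∀ i, d i ∈ Set.Icc (0:ℝ) 1

variable {n l m p : ℕ}

/-- The feasible set of the MPVC. -/
def MpvcFeasible (g : Fin l → Rn n → ℝ) (h : Fin m → Rn n → ℝ)
    (G H : Fin p → Rn n → ℝ) : Set (Rn n) :=
  {x | (∀ i, g i x ≤ 0) ∧ (∀ i, h i x = 0) ∧ (∀ i, 0 ≤ H i x) ∧
    (∀ i, G i x * H i x ≤ 0)}

/-- The MPVC-linearized tangent cone at xb. -/
def MpvcLinCone (g : Fin l → Rn n → ℝ) (h : Fin m → Rn n → ℝ)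
    (G H : Fin p → Rn n → ℝ) (xb : Rn n) : Set (Rn n) :=
  {d | (∀ i, g i xb = 0 → ⟪gradient (g i) xb, d⟫ ≤ 0) ∧
    (∀ i, ⟪gradient (h i) xb, d⟫ = 0) ∧
    (∀ i, G i xb = 0 → 0 < H i xb → ⟪gradient (G i) xb, d⟫ ≤ 0) ∧
    (∀ i, 0 < G i xb → H i xb = 0 → ⟪gradient (H i) xb, d⟫ = 0) ∧
    (∀ i, (G i xb = 0 ∧ H i xb = 0) ∨ (G i xb < 0 ∧ H i xb = 0) →
      0 ≤ ⟪gradient (H i) xb, d⟫) ∧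
    (∀ i, G i xb = 0 → H i xb = 0 →
      ⟪gradient (G i) xb, d⟫ * ⟪gradient (H i) xb, d⟫ ≤ 0)}

/-- The weak stationarity system of the MPVC for given multipliers. -/
def MpvcWeakMult (f : Rn n → ℝ) (g : Fin l → Rn n → ℝ) (h : Fin m → Rn n → ℝ)
    (G H : Fin p → Rn n → ℝ) (xb : Rn n)
    (lam : Fin l → ℝ) (eta : Fin m → ℝ) (mu nu : Fin p → ℝ) : Prop :=
  gradient f xb + ∑ i, lam i • gradient (g i) xb + ∑ i, eta i • gradient (h i) xb
    + ∑ i, mu i • gradient (G i) xb - ∑ i, nu i • gradient (H i) xb = 0 ∧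
  (∀ i, g i xb = 0 → 0 ≤ lam i) ∧ (∀ i, g i xb ≠ 0 → lam i = 0) ∧
  (∀ i, (0 < G i xb ∧ H i xb = 0) ∨ (G i xb < 0 ∧ H i xb = 0) ∨
    (G i xb < 0 ∧ 0 < H i xb) → mu i = 0) ∧
  (∀ i, (G i xb = 0 ∧ 0 < H i xb) ∨ (G i xb = 0 ∧ H i xb = 0) → 0 ≤ mu i) ∧
  (∀ i, (G i xb = 0 ∧ 0 < H i xb) ∨ (G i xb < 0 ∧ 0 < H i xb) → nu i = 0) ∧
  (∀ i, G i xb < 0 → H i xb = 0 → 0 ≤ nu i)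

/-- A_α-stationarity for the MPVC. -/
def MpvcAStat (f : Rn n → ℝ) (g : Fin l → Rn n → ℝ) (h : Fin m → Rn n → ℝ)
    (G H : Fin p → Rn n → ℝ) (xb : Rn n) (α : Fin p → ℝ) : Prop :=
  ∃ lam eta mu nu, MpvcWeakMult f g h G H xb lam eta mu nu ∧
    (∀ i, G i xb = 0 → H i xb = 0 → α i = 0 → mu i = 0) ∧
    (∀ i, G i xb = 0 → H i xb = 0 → α i = 1 → 0 ≤ nu i)

/-- P_α-stationarity for the MPVC. -/
def MpvcPStat (f : Rn n → ℝ) (g : Fin l → Rn n → ℝ) (h : Fin m → Rn n → ℝ)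
    (G H : Fin p → Rn n → ℝ) (xb : Rn n) (α : Fin p → ℝ) : Prop :=
  ∃ lam eta mu nu, MpvcWeakMult f g h G H xb lam eta mu nu ∧
    (∀ i, G i xb = 0 → H i xb = 0 → α i = 0 → mu i = 0) ∧
    (∀ i, G i xb = 0 → H i xb = 0 → α i = 1 →
      (mu i = 0 ∧ 0 ≤ nu i) ∨ nu i = 0)

/-- C_d-stationarity for the MPVC. -/
def MpvcCStat (f : Rn n → ℝ) (g : Fin l → Rn n → ℝ) (h : Fin m → Rn n → ℝ)
    (G H : Fin p → Rn n → ℝ) (xb : Rn n) (d : Fin p → ℝ) : Prop :=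
  ∃ lam eta mu nu, MpvcWeakMult f g h G H xb lam eta mu nu ∧
    (∀ i, G i xb = 0 → H i xb = 0 →
      (mu i = 0 ∧ 0 ≤ nu i) ∨ (1 - d i) * mu i = -(d i * nu i))

/-- M-stationarity for the MPVC. -/
def MpvcMStat (f : Rn n → ℝ) (g : Fin l → Rn n → ℝ) (h : Fin m → Rn n → ℝ)
    (G H : Fin p → Rn n → ℝ) (xb : Rn n) : Prop :=
  ∃ lam eta mu nu, MpvcWeakMult f g h G H xb lam eta mu nu ∧
    (∀ i, G i xb = 0 → H i xb = 0 → mu i * nu i = 0)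

/-- The feasible set of the branch problem NLP(0) associated with xb. -/
def MpvcNlp0Feasible (g : Fin l → Rn n → ℝ) (h : Fin m → Rn n → ℝ)
    (G H : Fin p → Rn n → ℝ) (xb : Rn n) : Set (Rn n) :=
  {x | (∀ i, g i x ≤ 0) ∧ (∀ i, h i x = 0) ∧
    (∀ i, (0 < G i xb ∧ H i xb = 0) ∨ (G i xb = 0 ∧ H i xb = 0) → H i x = 0) ∧
    (∀ i, (G i xb < 0 ∧ H i xb = 0) ∨ (G i xb < 0 ∧ 0 < H i xb) ∨
      (G i xb = 0 ∧ 0 < H i xb) → G i x ≤ 0 ∧ 0 ≤ H i x)}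

/-- The standard linearization cone of NLP(0) at xb. -/
def MpvcNlp0LinCone (g : Fin l → Rn n → ℝ) (h : Fin m → Rn n → ℝ)
    (G H : Fin p → Rn n → ℝ) (xb : Rn n) : Set (Rn n) :=
  {d | (∀ i, g i xb = 0 → ⟪gradient (g i) xb, d⟫ ≤ 0) ∧
    (∀ i, ⟪gradient (h i) xb, d⟫ = 0) ∧
    (∀ i, (0 < G i xb ∧ H i xb = 0) ∨ (G i xb = 0 ∧ H i xb = 0) →
      ⟪gradient (H i) xb, d⟫ = 0) ∧
    (∀ i, G i xb = 0 → 0 < H i xb → ⟪gradient (G i) xb, d⟫ ≤ 0) ∧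
    (∀ i, G i xb < 0 → H i xb = 0 → 0 ≤ ⟪gradient (H i) xb, d⟫)}

/-! ### Farkas' lemma -/

/-- Farkas' lemma for finitely many generators. Induction on the generators: if the hypothesis
fails without `a k`, a witness `q`, scaled to `⟪a k, q⟫ = 1`, is used to replace every vector `b` by
`b - ⟪b, q⟫ • a k`, which removes `a k` from the system. -/
lemma farkas_inner {E ι : Type*} [NormedAddCommGroup E] [InnerProductSpace ℝ E]
    (s : Finset ι) (a : ι → E) (c : E)
    (hc : ∀ v, (∀ j ∈ s, ⟪a j, v⟫ ≤ 0) → ⟪c, v⟫ ≤ 0) :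
    ∃ y : ι → ℝ, (∀ j, 0 ≤ y j) ∧ c = ∑ j ∈ s, y j • a j := by
  classical
  induction s using Finset.induction_on generalizing a c with
  | empty =>
    refine ⟨fun _ => 0, fun _ => le_rfl, ?_⟩
    have h0 := hc c (by simp)
    simpa using h0
  | insert k s hk ih =>
    by_cases hs : ∀ v, (∀ j ∈ s, ⟪a j, v⟫ ≤ 0) → ⟪c, v⟫ ≤ 0
    · obtain ⟨y, hy, hcy⟩ := ih a c hs
      refine ⟨fun j => if j = k then 0 else y j, fun j => ?_, ?_⟩
      · dsimp only
        split_ifs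
        exacts [le_rfl, hy j]
      · rw [Finset.sum_insert hk, hcy]
        simp only [if_true, zero_smul, zero_add]
        refine Finset.sum_congr rfl fun j hj => ?_
        rw [if_neg (ne_of_mem_of_not_mem hj hk)]
    · push Not at hs
      obtain ⟨v, hv, hcv⟩ := hs
      have hkv : 0 < ⟪a k, v⟫ := by
        by_contra hcon
        refine absurd (hc v ?_) (not_le.mpr hcv)
        intro j hj
        rcases Finset.mem_insert.mp hj with rfl | hj
        exacts [not_lt.mp hcon, hv j hj]
      obtain ⟨q, hq⟩ : ∃ q : E, q = ⟪a k, v⟫⁻¹ • v := ⟨_, rfl⟩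
      have hkq : ⟪a k, q⟫ = 1 := by
        rw [hq, real_inner_smul_right, inv_mul_cancel₀ hkv.ne']
      have hjq : ∀ j ∈ s, ⟪a j, q⟫ ≤ 0 := fun j hj => by
        rw [hq, real_inner_smul_right]
        exact mul_nonpos_of_nonneg_of_nonpos (inv_nonneg.mpr hkv.le) (hv j hj)
      have hcq : 0 < ⟪c, q⟫ := by
        rw [hq, real_inner_smul_right]
        positivity
      -- Project along `q` onto the hyperplane orthogonal to `a k`.
      have key : ∀ (b w : E), ⟪b - ⟪b, q⟫ • a k, w⟫ = ⟪b, w - ⟪a k, w⟫ • q⟫ := by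
        intro b w
        rw [inner_sub_left, inner_sub_right, real_inner_smul_left, real_inner_smul_right]
        ring
      obtain ⟨y, hy, hcy⟩ := ih (fun j => a j - ⟪a j, q⟫ • a k) (c - ⟪c, q⟫ • a k) (by
        intro w hw
        rw [key]
        refine hc _ fun j hj => ?_
        rcases Finset.mem_insert.mp hj with rfl | hj
        · rw [inner_sub_right, real_inner_smul_right, hkq]
          simp
        · rw [← key]
          exact hw j hj)
      refine ⟨fun j => if j = k then ⟪c, q⟫ - ∑ i ∈ s, y i * ⟪a i, q⟫ else y j, fun j => ?_, ?_⟩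
      · dsimp only
        split_ifs
        · have : ∑ i ∈ s, y i * ⟪a i, q⟫ ≤ 0 :=
            Finset.sum_nonpos fun i hi => mul_nonpos_of_nonneg_of_nonpos (hy i) (hjq i hi)
          linarith
        · exact hy j
      · rw [Finset.sum_insert hk]
        have h1 : ∑ j ∈ s, (if j = k then ⟪c, q⟫ - ∑ i ∈ s, y i * ⟪a i, q⟫ else y j) • a j
            = ∑ j ∈ s, y j • a j :=
          Finset.sum_congr rfl fun j hj => by rw [if_neg (ne_of_mem_of_not_mem hj hk)]
        rw [h1]
        simp only [if_true]
        have h2 : c = ⟪c, q⟫ • a k + ∑ j ∈ s, y j • (a j - ⟪a j, q⟫ • a k) := by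
          rw [← hcy]; abel
        conv_lhs => rw [h2]
        simp only [smul_sub, Finset.sum_sub_distrib, smul_smul, sub_smul, Finset.sum_smul]
        abel

/-! ### Scarf's combinatorial lemma -/

/-- `σ` is dominant for the family of ranks `r` if no `y` beats the `r i`-minimum of `σ` for every
`i` simultaneously. -/
def ScarfDom {I X : Type*} (r : I → X → ℕ) (σ : Finset X) : Prop :=
  ∀ y, ∃ i, ∀ x ∈ σ, r i y ≤ r i x

/-- Structure of a dominant set `τ` with one element less than there are orders. Let `w i` be its
`r i`-minimum. Dominance makes `w` surjective onto `τ`, so exactly one pair `a ≠ b` has `w a = w b`.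
Adding `x` keeps `τ` dominant if and only if, for `e = a` or `e = b`, `x` is `r e`-maximal among the
elements that exceed the minima of `τ` in all orders other than `e`. -/
lemma scarf_door {I X : Type*} [Fintype I] [DecidableEq X]
    (r : I → X → ℕ) (hr : ∀ i, Function.Injective (r i)) (τ : Finset X) (hτ : τ.Nonempty)
    (hcard : τ.card + 1 = Fintype.card I) (hdom : ScarfDom r τ) :
    ∃ (w : I → X) (a b : I), a ≠ b ∧ w a = w b ∧ (∀ i, w i ∈ τ) ∧
      (∀ i, ∀ x ∈ τ, r i (w i) ≤ r i x) ∧ (∀ x ∈ τ, ∃ i, x = w i) ∧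
      (∀ i j, i ≠ j → w i = w j → i = a ∨ i = b) ∧
      (∀ x, x ∉ τ → (ScarfDom r (insert x τ) ↔ ∃ e, (e = a ∨ e = b) ∧
        (∀ i, i ≠ e → r i (w i) < r i x) ∧
        ∀ y, (∀ i, i ≠ e → r i (w i) < r i y) → r e y ≤ r e x)) := by
  classical
  have hw : ∀ i, ∃ w ∈ τ, ∀ x ∈ τ, r i w ≤ r i x := fun i => τ.exists_min_image (r i) hτ
  choose w hwτ hwmin using hw
  have hsurj : ∀ x ∈ τ, ∃ i, x = w i := by
    intro x hx
    obtain ⟨i, hi⟩ := hdom x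
    exact ⟨i, hr i (le_antisymm (hi _ (hwτ i)) (hwmin i x hx))⟩
  obtain ⟨a, -, b, -, hab, hwab⟩ := Finset.exists_ne_map_eq_of_card_lt_of_maps_to
    (s := (Finset.univ : Finset I)) (t := τ) (f := w)
    (by rw [Finset.card_univ]; omega) (fun i _ => hwτ i)
  -- Already the indices other than one of `a`, `b` hit all of `τ`, hence do so injectively.
  have hinj : ∀ a b, a ≠ b → w a = w b → ∀ i j, i ≠ a → j ≠ a → w i = w j → i = j := by
    intro a b hab hwab
    have himg : (Finset.univ.erase a).image w = τ := by
      apply Finset.Subset.antisymm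
      · intro x hx
        obtain ⟨i, -, rfl⟩ := Finset.mem_image.mp hx
        exact hwτ i
      · intro x hx
        obtain ⟨i, rfl⟩ := hsurj x hx
        by_cases hia : i = a
        · exact Finset.mem_image.mpr ⟨b, by simp [hab.symm], by rw [hia, hwab]⟩
        · exact Finset.mem_image.mpr ⟨i, by simp [hia], rfl⟩
    have hinjOn : Set.InjOn w (Finset.univ.erase a : Finset I) := by
      rw [← Finset.card_image_iff, himg, Finset.card_erase_of_mem (Finset.mem_univ _),
        Finset.card_univ]
      omega
    intro i j hi hj hij
    exact hinjOn (by simp [hi]) (by simp [hj]) hij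
  have hred : ∀ i j, i ≠ j → w i = w j → i = a ∨ i = b := by
    intro i j hij hwij
    by_contra hcon
    push Not at hcon
    have hja : j = a := by
      by_contra hja
      exact hij (hinj a b hab hwab i j hcon.1 hja hwij)
    have hjb : j ≠ b := fun hjb => hab (hja.symm.trans hjb)
    exact hij (hinj b a hab.symm hwab.symm i j hcon.2 hjb hwij)
  refine ⟨w, a, b, hab, hwab, hwτ, hwmin, hsurj, hred, fun x hx => ⟨fun hd => ?_, ?_⟩⟩
  · obtain ⟨e, he⟩ := hd x
    have hstrict : ∀ i, r i x ≤ r i (w i) → r i x < r i (w i) := fun i hi =>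
      lt_of_le_of_ne hi fun h => hx (hr i h ▸ hwτ i)
    have hex : r e x < r e (w e) := hstrict e (he _ (Finset.mem_insert_of_mem (hwτ e)))
    -- Every element of `τ` stays a minimum, for an index at which `x` is not minimal.
    have hback : ∀ i, ∃ j, r j (w i) ≤ r j x ∧ w i = w j := by
      intro i
      obtain ⟨j, hj⟩ := hd (w i)
      exact ⟨j, hj x (Finset.mem_insert_self _ _), hr j (le_antisymm
        (hj _ (Finset.mem_insert_of_mem (hwτ j))) (hwmin j _ (hwτ i)))⟩
    have heab : e = a ∨ e = b := by
      obtain ⟨j, hj, hwj⟩ := hback e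
      refine hred e j ?_ hwj
      rintro rfl
      omega
    refine ⟨e, heab, fun i hi => ?_, fun y hy => ?_⟩
    · by_contra hcon
      have hix := hstrict i (not_lt.mp hcon)
      obtain ⟨j, hj, hwj⟩ := hback i
      have hji : j ≠ i := by rintro rfl; omega
      have hje : j ≠ e := by
        rintro rfl
        rw [hwj] at hj
        omega
      have h1 := hred i j hji.symm hwj
      have h2 := hred j i hji hwj.symm
      grind
    · obtain ⟨j, hj⟩ := hd y
      by_cases hje : j = e
      · subst hje
        exact hj x (Finset.mem_insert_self _ _)
      · have := hj _ (Finset.mem_insert_of_mem (hwτ j))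
        have := hy j hje
        omega
  · rintro ⟨e, heab, hxe, hmax⟩ y
    by_cases hy : ∀ i, i ≠ e → r i (w i) < r i y
    · refine ⟨e, fun z hz => ?_⟩
      rcases Finset.mem_insert.mp hz with rfl | hz
      · exact hmax y hy
      · obtain ⟨j, hj⟩ := hdom y
        by_cases hje : j = e
        · subst hje
          exact hj z hz
        · have := hj _ (hwτ j)
          have := hy j hje
          omega
    · push Not at hy
      obtain ⟨i, hie, hi⟩ := hy
      refine ⟨i, fun z hz => ?_⟩
      rcases Finset.mem_insert.mp hz with rfl | hz
      · exact hi.trans (hxe i hie).le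
      · exact hi.trans (hwmin i z hz)

/-- The dominant sets of full size containing `τ`. -/
def scarfRooms {I X : Type*} [Fintype I] [Fintype X] (r : I → X → ℕ) (τ : Finset X) :
    Finset (Finset X) := by
  classical
  exact Finset.univ.filter fun σ => (σ.card = Fintype.card I ∧ ScarfDom r σ) ∧ τ ⊆ σ

/-- Each `τ` lies in exactly two dominant sets of full size, except for the boundary set consisting
of all `d i` with `i ≠ i₀`, which lies in one. The `d i` are dummies: `d i` is the bottom element of
the order `r i` and lies above all non-dummies in the other orders. By `hface`, `τ` is no other
boundary set of this kind. -/
lemma scarf_rooms_card {I X : Type*} [Fintype I] [Fintype X] [DecidableEq I] [DecidableEq X]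
    (r : I → X → ℕ) (hr : ∀ i, Function.Injective (r i)) (d : I → X)
    (hd : ∀ i y, y ≠ d i → r i (d i) < r i y)
    (hd' : ∀ i j x, j ≠ i → x ∉ Set.range d → r i x < r i (d j))
    (hT : ∃ x, x ∉ Set.range d) (hdinj : Function.Injective d)
    (i₀ : I) (τ : Finset X) (hτ : τ.Nonempty)
    (hcard : τ.card + 1 = Fintype.card I) (hdom : ScarfDom r τ)
    (hface : ∀ k, τ = (Finset.univ.erase k).image d → k = i₀) :
    (scarfRooms r τ).card = if τ = (Finset.univ.erase i₀).image d then 1 else 2 := by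
  obtain ⟨w, a, b, hab, hwab, hwτ, hwmin, hsurj, hred, hins⟩ := scarf_door r hr τ hτ hcard hdom
  -- `Y e`: the elements exceeding the minima of `τ` at all indices other than `e`.
  let Y : I → Finset X := fun e => Finset.univ.filter fun y => ∀ i, i ≠ e → r i (w i) < r i y
  have hYmem : ∀ e y, y ∈ Y e ↔ ∀ i, i ≠ e → r i (w i) < r i y := by intro e y; simp [Y]
  have hYτ : ∀ e, (e = a ∨ e = b) → ∀ y ∈ Y e, y ∉ τ := by
    intro e he y hy hyτ
    rw [hYmem] at hy
    obtain ⟨i, rfl⟩ := hsurj y hyτ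
    by_cases hie : i = e
    · subst hie
      rcases he with rfl | rfl
      · have := hy b hab.symm
        rw [hwab] at this
        omega
      · have := hy a hab
        rw [hwab] at this
        omega
    · exact lt_irrefl _ (hy i hie)
  have hmem : ∀ σ, σ ∈ scarfRooms r τ ↔ ∃ e, (e = a ∨ e = b) ∧ ∃ x ∈ Y e,
      (∀ y ∈ Y e, r e y ≤ r e x) ∧ σ = insert x τ := by
    intro σ
    simp only [scarfRooms, Finset.mem_filter, Finset.mem_univ, true_and]
    constructor
    · rintro ⟨⟨hσ, hσd⟩, hsub⟩
      obtain ⟨x, hx, rfl⟩ : ∃ x, x ∉ τ ∧ σ = insert x τ := by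
        have h1 : (σ \ τ).card = 1 := by
          rw [Finset.card_sdiff_of_subset hsub]; omega
        obtain ⟨x, hx⟩ := Finset.card_eq_one.mp h1
        have hx' : x ∈ σ \ τ := by rw [hx]; simp
        refine ⟨x, (Finset.mem_sdiff.mp hx').2, ?_⟩
        rw [← Finset.sdiff_union_of_subset hsub, hx]
        rfl
      obtain ⟨e, he, h1, h2⟩ := (hins x hx).mp hσd
      exact ⟨e, he, x, (hYmem e x).mpr h1, fun y hy => h2 y ((hYmem e y).mp hy), rfl⟩
    · rintro ⟨e, he, x, hx, hmax, rfl⟩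
      have hxτ := hYτ e he x hx
      refine ⟨⟨by rw [Finset.card_insert_of_notMem hxτ]; exact hcard, ?_⟩,
        Finset.subset_insert _ _⟩
      exact (hins x hxτ).mpr ⟨e, he, (hYmem e x).mp hx,
        fun y hy => hmax y ((hYmem e y).mpr hy)⟩
  have hdisj : ∀ x, x ∈ Y a → x ∉ Y b := by
    intro x ha hb
    rw [hYmem] at ha hb
    obtain ⟨i, hi⟩ := hdom x
    have h1 := hi _ (hwτ i)
    by_cases hia : i = a
    · have := hb i (by rw [hia]; exact hab)
      omega
    · have := ha i hia
      omega
  have hmaxY : ∀ e, (Y e).Nonempty → ∃ x ∈ Y e, ∀ y ∈ Y e, r e y ≤ r e x :=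
    fun e he => (Y e).exists_max_image (r e) he
  have huniq : ∀ e x x', x ∈ Y e → x' ∈ Y e → (∀ y ∈ Y e, r e y ≤ r e x) →
      (∀ y ∈ Y e, r e y ≤ r e x') → x = x' :=
    fun e x x' hx hx' h h' => hr e (le_antisymm (h' x hx) (h x' hx'))
  split_ifs with hface'
  · have hwd : ∀ i, i ≠ i₀ → w i = d i := by
      intro i hi
      by_contra hne
      have h1 := hd i (w i) hne
      have h2 := hwmin i (d i) (by rw [hface']; simp [hdinj.eq_iff, hi])
      omega
    -- One of the two redundant indices is `i₀`; it gives a room, the other one gives none.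
    have hone : ∀ a' b', a' ≠ b' → w a' = w b' → a' = i₀ → (Y a').Nonempty ∧ Y b' = ∅ := by
      rintro a' b' hab' hw' rfl
      constructor
      · obtain ⟨x, hx⟩ := hT
        refine ⟨x, (hYmem _ _).mpr fun i hi => ?_⟩
        rw [hwd i hi]
        exact hd i x fun h => hx ⟨i, h.symm⟩
      · rw [Finset.eq_empty_iff_forall_notMem]
        intro y hy
        rw [hYmem] at hy
        have h1 := hy a' hab'
        rw [hw', hwd b' hab'.symm] at h1
        by_cases hyr : y ∈ Set.range d
        · obtain ⟨k, rfl⟩ := hyr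
          by_cases hk : k = a'
          · subst hk
            have := hd k (d b') (fun h => hab' (hdinj h).symm)
            omega
          · by_cases hkb : k = b'
            · subst hkb
              omega
            · have := hy k hkb
              rw [hwd k hk] at this
              omega
        · have := hd' a' b' y hab'.symm hyr
          omega
    have hi₀ : a = i₀ ∨ b = i₀ := by
      by_contra hcon
      push Not at hcon
      exact hab (hdinj (by rw [← hwd a hcon.1, ← hwd b hcon.2, hwab]))
    have hcase : ∃ e e', (e = a ∧ e' = b ∨ e = b ∧ e' = a) ∧ (Y e).Nonempty ∧ Y e' = ∅ := by
      rcases hi₀ with h | h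
      · exact ⟨a, b, Or.inl ⟨rfl, rfl⟩, hone a b hab hwab h⟩
      · exact ⟨b, a, Or.inr ⟨rfl, rfl⟩, hone b a hab.symm hwab.symm h⟩
    obtain ⟨e, e', hee, hne, hempty⟩ := hcase
    obtain ⟨x, hx, hxmax⟩ := hmaxY e hne
    rw [Finset.card_eq_one]
    refine ⟨insert x τ, ?_⟩
    ext σ
    rw [hmem, Finset.mem_singleton]
    constructor
    · rintro ⟨k, hk, z, hz, hzmax, rfl⟩
      have hke : k = e := by
        by_contra hke
        have : k = e' := by grind
        rw [this, hempty] at hz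
        simp at hz
      subst hke
      rw [huniq k x z hx hz hxmax hzmax]
    · rintro rfl
      exact ⟨e, by grind, x, hx, hxmax, rfl⟩
  · -- Away from the exceptional face, the point `d e` itself lies in `Y e`.
    have hnon : ∀ e e', e ≠ e' → w e = w e' → (Y e).Nonempty := by
      intro e e' hee hwe
      have hallface : ∀ k, (∀ x ∈ τ, x ∈ Set.range d) → d k ∉ τ → False := by
        intro k hall hk
        have hτk : τ = (Finset.univ.erase k).image d := by
          apply Finset.eq_of_subset_of_card_le
          · intro x hx
            obtain ⟨j, rfl⟩ := hall x hx
            exact Finset.mem_image.mpr ⟨j, Finset.mem_erase.mpr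
              ⟨fun h => hk (h ▸ hx), Finset.mem_univ _⟩, rfl⟩
          · rw [Finset.card_image_of_injective _ hdinj,
              Finset.card_erase_of_mem (Finset.mem_univ _), Finset.card_univ]
            omega
        have := hface k hτk
        subst this
        exact hface' hτk
      -- Since some `d k` is missing from `τ`, an element outside the range of `d` is present.
      have hreal : ∃ x ∈ τ, x ∉ Set.range d := by
        by_contra hcon
        push Not at hcon
        have hk : ∃ k, d k ∉ τ := by
          by_contra hk
          push Not at hk
          have : (Finset.univ.image d).card ≤ τ.card :=
            Finset.card_le_card (by intro x hx; obtain ⟨k, -, rfl⟩ := Finset.mem_image.mp hx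
                                    exact hk k)
          rw [Finset.card_image_of_injective _ hdinj, Finset.card_univ] at this
          omega
        obtain ⟨k, hk⟩ := hk
        exact hallface k hcon hk
      obtain ⟨x, hxτ, hxd⟩ := hreal
      have hlow : ∀ i, i ≠ e → r i (w i) < r i (d e) := fun i hi =>
        (hwmin i x hxτ).trans_lt (hd' i e x hi.symm hxd)
      exact ⟨d e, (hYmem _ _).mpr hlow⟩
    obtain ⟨x, hx, hxmax⟩ := hmaxY a (hnon a b hab hwab)
    obtain ⟨x', hx', hxmax'⟩ := hmaxY b (hnon b a hab.symm hwab.symm)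
    rw [Finset.card_eq_two]
    refine ⟨insert x τ, insert x' τ, ?_, ?_⟩
    · intro h
      have h1 : x ∈ insert x' τ := h ▸ Finset.mem_insert_self x τ
      rcases Finset.mem_insert.mp h1 with rfl | h1
      · exact hdisj x hx hx'
      · exact hYτ a (Or.inl rfl) x hx h1
    · ext σ
      rw [hmem, Finset.mem_insert, Finset.mem_singleton]
      constructor
      · rintro ⟨k, rfl | rfl, z, hz, hzmax, rfl⟩
        · left; rw [huniq k x z hx hz hxmax hzmax]
        · right; rw [huniq k x' z hx' hz hxmax' hzmax]
      · rintro (rfl | rfl)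
        · exact ⟨a, Or.inl rfl, x, hx, hxmax, rfl⟩
        · exact ⟨b, Or.inr rfl, x', hx', hxmax', rfl⟩

/-- Scarf's lemma: if the dummies `d i` are coloured by their own index, then some dominant set
carries every colour exactly once. Incidences between rooms and doors are counted modulo two. -/
theorem scarf_colorful {I X : Type*} [Fintype I] [Fintype X] [DecidableEq I] [DecidableEq X]
    [Nontrivial I] (r : I → X → ℕ) (hr : ∀ i, Function.Injective (r i)) (d : I → X)
    (hd : ∀ i y, y ≠ d i → r i (d i) < r i y)
    (hd' : ∀ i j x, j ≠ i → x ∉ Set.range d → r i x < r i (d j))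
    (hT : ∃ x, x ∉ Set.range d) (c : X → I) (hc : ∀ i, c (d i) = i) :
    ∃ σ : Finset X, ScarfDom r σ ∧ Set.InjOn c σ ∧ σ.image c = Finset.univ := by
  classical
  by_contra hno
  push Not at hno
  have hdinj : Function.Injective d := fun i j h => by rw [← hc i, ← hc j, h]
  obtain ⟨i₀⟩ : Nonempty I := inferInstance
  have hcardI : 1 < Fintype.card I := Fintype.one_lt_card
  let R : Finset (Finset X) :=
    Finset.univ.filter fun σ => σ.card = Fintype.card I ∧ ScarfDom r σ
  let D : Finset (Finset X) := Finset.univ.filter fun τ =>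
    τ.card + 1 = Fintype.card I ∧ ScarfDom r τ ∧ τ.image c = Finset.univ.erase i₀
  have hnotcol : ∀ σ ∈ R, σ.image c ≠ Finset.univ := by
    intro σ hσ himg
    obtain ⟨h1, h2⟩ := (Finset.mem_filter.mp hσ).2
    refine hno σ h2 ?_ himg
    rw [← Finset.card_image_iff, himg, Finset.card_univ, h1]
  have hdouble := Finset.sum_card_bipartiteAbove_eq_sum_card_bipartiteBelow
    (s := D) (t := R) (fun τ σ => τ ⊆ σ)
  have hinjD : ∀ τ ∈ D, Set.InjOn c τ := by
    intro τ hτ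
    obtain ⟨h1, h2, h3⟩ := (Finset.mem_filter.mp hτ).2
    rw [← Finset.card_image_iff, h3, Finset.card_erase_of_mem (Finset.mem_univ _),
      Finset.card_univ]
    omega
  have heven : Even (∑ σ ∈ R, (D.bipartiteBelow (fun τ σ => τ ⊆ σ) σ).card) := by
    refine Finset.even_sum _ fun σ hσ => ?_
    by_cases hemp : D.bipartiteBelow (fun τ σ => τ ⊆ σ) σ = ∅
    · simp [hemp]
    obtain ⟨τ, hτ⟩ := Finset.nonempty_iff_ne_empty.mpr hemp
    obtain ⟨hτD, hsub⟩ := Finset.mem_filter.mp hτ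
    obtain ⟨h1, h2, h3⟩ := (Finset.mem_filter.mp hτD).2
    have hinj := hinjD τ hτD
    obtain ⟨hσ1, hσ2⟩ := (Finset.mem_filter.mp hσ).2
    obtain ⟨x, hx, rfl⟩ : ∃ x, x ∉ τ ∧ σ = insert x τ := by
      have h1 : (σ \ τ).card = 1 := by
        rw [Finset.card_sdiff_of_subset hsub]; omega
      obtain ⟨x, hx⟩ := Finset.card_eq_one.mp h1
      have hx' : x ∈ σ \ τ := by rw [hx]; simp
      refine ⟨x, (Finset.mem_sdiff.mp hx').2, ?_⟩
      rw [← Finset.sdiff_union_of_subset hsub, hx]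
      rfl
    have hcx : c x ≠ i₀ := by
      intro hcx
      apply hnotcol _ hσ
      rw [Finset.image_insert, h3, hcx, Finset.insert_erase (Finset.mem_univ _)]
    -- The colour of the added element occurs exactly once more, so it can be dropped in two ways.
    obtain ⟨x', hx', hcx'⟩ : ∃ x' ∈ τ, c x' = c x := by
      have : c x ∈ τ.image c := by rw [h3]; simp [hcx]
      simpa using this
    have hxx' : x ≠ x' := fun h => hx (h ▸ hx')
    have hset : D.bipartiteBelow (fun τ σ => τ ⊆ σ) (insert x τ)
        = {(insert x τ).erase x, (insert x τ).erase x'} := by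
      ext ρ
      rw [Finset.mem_bipartiteBelow, Finset.mem_insert, Finset.mem_singleton]
      constructor
      · rintro ⟨hρ, hρsub⟩
        obtain ⟨g1, g2, g3⟩ := (Finset.mem_filter.mp hρ).2
        have hρinj := hinjD ρ hρ
        have hor : x ∉ ρ ∨ x' ∉ ρ := by
          by_contra hcon
          push Not at hcon
          exact hxx' (hρinj hcon.1 hcon.2 hcx'.symm)
        rcases hor with h | h
        · left
          refine Finset.eq_of_subset_of_card_le (Finset.subset_erase.mpr ⟨hρsub, h⟩) ?_
          rw [Finset.card_erase_of_mem (Finset.mem_insert_self _ _)]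
          omega
        · right
          refine Finset.eq_of_subset_of_card_le (Finset.subset_erase.mpr ⟨hρsub, h⟩) ?_
          rw [Finset.card_erase_of_mem (Finset.mem_insert_of_mem hx')]
          omega
      · rintro (rfl | rfl)
        · rw [Finset.erase_insert hx]
          exact ⟨hτD, hsub⟩
        · refine ⟨Finset.mem_filter.mpr ⟨Finset.mem_univ _, ?_, ?_, ?_⟩, Finset.erase_subset _ _⟩
          · rw [Finset.card_erase_of_mem (Finset.mem_insert_of_mem hx')]
            omega
          · intro y
            obtain ⟨i, hi⟩ := hσ2 y
            exact ⟨i, fun z hz => hi z (Finset.mem_of_mem_erase hz)⟩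
          · rw [← h3]
            ext k
            simp only [Finset.mem_image, Finset.mem_erase, Finset.mem_insert]
            constructor
            · rintro ⟨z, ⟨hz, rfl | hz'⟩, rfl⟩
              exacts [⟨x', hx', hcx'⟩, ⟨z, hz', rfl⟩]
            · rintro ⟨z, hz, rfl⟩
              by_cases hzx : z = x'
              · exact ⟨x, ⟨hxx', Or.inl rfl⟩, by rw [hzx, hcx']⟩
              · exact ⟨z, ⟨hzx, Or.inr hz⟩, rfl⟩
    rw [hset, Finset.card_pair]
    · exact even_two
    · intro h
      have : x' ∈ (insert x τ).erase x := Finset.mem_erase.mpr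
        ⟨hxx'.symm, Finset.mem_insert_of_mem hx'⟩
      rw [h] at this
      simp at this
  have hodd : Odd (∑ τ ∈ D, (R.bipartiteAbove (fun τ σ => τ ⊆ σ) τ).card) := by
    have hcount : ∀ τ ∈ D, (R.bipartiteAbove (fun τ σ => τ ⊆ σ) τ).card
        = if τ = (Finset.univ.erase i₀).image d then 1 else 2 := by
      intro τ hτ
      obtain ⟨h1, h2, h3⟩ := (Finset.mem_filter.mp hτ).2
      rw [← scarf_rooms_card r hr d hd hd' hT hdinj i₀ τ (Finset.card_pos.mp (by omega)) h1 h2]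
      · congr 1
        ext σ
        simp [scarfRooms, R, Finset.mem_bipartiteAbove]
      · rintro k rfl
        rw [Finset.image_image] at h3
        have hcd : c ∘ d = id := funext hc
        rw [hcd, Finset.image_id] at h3
        by_contra hk
        have : k ∈ Finset.univ.erase k := by rw [h3]; simp [hk]
        simp at this
    have hstar : (Finset.univ.erase i₀).image d ∈ D := by
      refine Finset.mem_filter.mpr ⟨Finset.mem_univ _, ?_, ?_, ?_⟩
      · rw [Finset.card_image_of_injective _ hdinj, Finset.card_erase_of_mem (Finset.mem_univ _),
          Finset.card_univ]
        omega
      · intro y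
        by_cases hy : y ∈ Set.range d
        · obtain ⟨k, rfl⟩ := hy
          refine ⟨k, fun x _ => ?_⟩
          by_cases hxk : x = d k
          · rw [hxk]
          · exact (hd k x hxk).le
        · refine ⟨i₀, fun x hx => ?_⟩
          obtain ⟨j, hj, rfl⟩ := Finset.mem_image.mp hx
          exact (hd' i₀ j y (Finset.ne_of_mem_erase hj) hy).le
      · rw [Finset.image_image]
        have hcd : c ∘ d = id := funext hc
        rw [hcd, Finset.image_id]
    rw [Finset.sum_congr rfl hcount, ← Finset.add_sum_erase _ _ hstar, if_pos rfl]
    refine Odd.add_even odd_one (Finset.even_sum _ fun τ hτ => ?_)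
    rw [if_neg (Finset.ne_of_mem_erase hτ)]
    exact even_two
  rw [hdouble] at hodd
  exact (Nat.not_even_iff_odd.mpr hodd) heven

/-! ### The Poincaré–Miranda theorem -/

/-- Any colouring of the grid points of the simplex `∑ i, x i = N` admits a nonempty cluster of grid
points with coordinates within `|I|` of each other, in which every coordinate whose colour does not
occur is at most `|I|`. The cluster is the set of non-dummies in a fully coloured dominant set. -/
theorem grid_colors {I : Type*} [Fintype I] [DecidableEq I] [Nontrivial I] (N : ℕ)
    (c : (I → ℕ) → I) :
    ∃ σ : Finset (I → ℕ), σ.Nonempty ∧ (∀ x ∈ σ, ∑ i, x i = N) ∧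
      (∀ x ∈ σ, ∀ i, (∀ z ∈ σ, c z ≠ i) → x i ≤ Fintype.card I) ∧
      (∀ x ∈ σ, ∀ y ∈ σ, ∀ i, x i ≤ y i + Fintype.card I) := by
  classical
  let T := {x : I → ℕ // x ∈ Finset.piAntidiag (Finset.univ : Finset I) N}
  have hTmem : ∀ x : I → ℕ, x ∈ Finset.piAntidiag (Finset.univ : Finset I) N ↔ ∑ i, x i = N := by
    intro x; simp [Finset.mem_piAntidiag]
  let K := Fintype.card T
  let e : T ≃ Fin K := Fintype.equivFin T
  let idx : I ≃ Fin (Fintype.card I) := Fintype.equivFin I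
  obtain ⟨k₀⟩ : Nonempty I := inferInstance
  let t₀ : T := ⟨Pi.single k₀ N, (hTmem _).mpr (by simp)⟩
  -- Coordinate `i` ranks the grid, ties being broken by `e`; the dummy `inr i` lies below
  -- the grid in rank `i` and above it in every other rank.
  let r : I → T ⊕ I → ℕ := fun i z => Sum.elim (fun x : T => 1 + x.1 i * K + (e x : ℕ))
    (fun j => if j = i then 0 else 1 + (N + 1) * K + (idx j : ℕ)) z
  have hrl : ∀ i (x : T), r i (Sum.inl x) = 1 + x.1 i * K + (e x : ℕ) := fun _ _ => rfl
  have hrr : ∀ i j, r i (Sum.inr j) = if j = i then 0 else 1 + (N + 1) * K + (idx j : ℕ) :=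
    fun _ _ => rfl
  have hlt : ∀ i (x : T), r i (Sum.inl x) < 1 + (N + 1) * K := by
    intro i x
    have h1 : x.1 i ≤ N := by
      have h := Finset.single_le_sum (f := x.1) (fun _ _ => Nat.zero_le _) (Finset.mem_univ i)
      exact h.trans ((hTmem _).mp x.2).le
    have h2 := (e x).2
    have h3 := Nat.mul_le_mul_right K h1
    rw [hrl]
    linarith
  -- Ranks refine the coordinate order.
  have hmono : ∀ i (x y : T), r i (Sum.inl x) ≤ r i (Sum.inl y) → x.1 i ≤ y.1 i := by
    intro i x y hxy
    by_contra hcon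
    have h3 := Nat.mul_le_mul_right K (not_le.mp hcon)
    have h2 := (e y).2
    rw [hrl, hrl] at hxy
    rw [Nat.succ_mul] at h3
    omega
  obtain ⟨σ', hdom, -, himg⟩ := scarf_colorful r (by
      rintro i (x | j) (y | k) h
      · have h1 : x.1 i = y.1 i := le_antisymm (hmono i x y h.le) (hmono i y x h.ge)
        rw [hrl, hrl, h1] at h
        exact congrArg Sum.inl (e.injective (Fin.ext (by omega)))
      · have h1 := hlt i x
        rw [h, hrr] at h1
        have h2 := hrl i x
        rw [h, hrr] at h2
        split_ifs at h1 h2 <;> omega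
      · have h1 := hlt i y
        rw [← h, hrr] at h1
        have h2 := hrl i y
        rw [← h, hrr] at h2
        split_ifs at h1 h2 <;> omega
      · rw [hrr, hrr] at h
        split_ifs at h with h1 h2 h2
        · rw [h1, h2]
        · omega
        · omega
        · exact congrArg Sum.inr (idx.injective (Fin.ext (by omega)))) Sum.inr (by
      rintro i (x | j) hy
      · rw [hrr, hrl, if_pos rfl]; omega
      · have : j ≠ i := fun h => hy (by rw [h])
        rw [hrr, hrr, if_pos rfl, if_neg this]; omega) (by
      rintro i j (x | k) hji hx
      · have := hlt i x
        rw [hrr, if_neg hji]; omega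
      · exact absurd ⟨k, rfl⟩ hx) ⟨Sum.inl t₀, by simp⟩
    (Sum.elim (fun x => c x.1) id) (fun i => rfl)
  -- Dominance over a grid point is witnessed at an index that is the colour of a grid point.
  have hwit : ∀ y : T, ∃ x : T, Sum.inl x ∈ σ' ∧
      ∀ z : T, Sum.inl z ∈ σ' → y.1 (c x.1) ≤ z.1 (c x.1) := by
    intro y
    obtain ⟨i, hi⟩ := hdom (Sum.inl y)
    have : i ∈ σ'.image (Sum.elim (fun x : T => c x.1) id) := by rw [himg]; simp
    obtain ⟨z, hz, hzi⟩ := Finset.mem_image.mp this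
    rcases z with x | j
    · refine ⟨x, hz, fun z hz' => ?_⟩
      have hzi' : c x.1 = i := hzi
      rw [hzi']
      exact hmono i y z (hi _ hz')
    · have hj : j = i := hzi
      have := hi _ hz
      rw [hrr, hrl, if_pos hj] at this
      omega
  let σ : Finset (I → ℕ) := (Finset.univ.filter fun x : T => Sum.inl x ∈ σ').image Subtype.val
  have hσ : ∀ x, x ∈ σ ↔ ∃ h : x ∈ Finset.piAntidiag (Finset.univ : Finset I) N,
      (Sum.inl ⟨x, h⟩ : T ⊕ I) ∈ σ' := by
    intro x
    simp [σ, T]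
  have hσne : σ.Nonempty := by
    obtain ⟨x, hx, -⟩ := hwit t₀
    exact ⟨x.1, (hσ _).mpr ⟨x.2, hx⟩⟩
  let m : I → ℕ := fun i => σ.inf' hσne (fun x => x i)
  have hm : ∀ x ∈ σ, ∀ i, m i ≤ x i := fun x hx i => Finset.inf'_le (fun x : I → ℕ => x i) hx
  have hm' : ∀ i, ∃ x ∈ σ, x i = m i := fun i => by
    obtain ⟨x, hx, h⟩ := σ.exists_mem_eq_inf' hσne (fun x => x i)
    exact ⟨x, hx, h.symm⟩
  let C := σ.image c
  have hsum : N < ∑ i ∈ C, (m i + 1) := by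
    by_contra hcon
    push Not at hcon
    obtain ⟨x₀, hx₀⟩ := hσne
    let S := ∑ i ∈ C, (m i + 1)
    -- Otherwise some grid point exceeds all minima on `C`.
    let y : I → ℕ := fun i => (if i ∈ C then m i + 1 else 0) + if i = c x₀ then N - S else 0
    have hy : ∑ i, y i = N := by
      simp only [y]
      rw [Finset.sum_add_distrib, Finset.sum_ite_mem, Finset.univ_inter, Finset.sum_ite_eq',
        if_pos (Finset.mem_univ _)]
      exact Nat.add_sub_cancel' hcon
    obtain ⟨x, hx, hxz⟩ := hwit ⟨y, (hTmem y).mpr hy⟩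
    obtain ⟨z, hz, hzm⟩ := hm' (c x.1)
    obtain ⟨hzT, hzσ⟩ := (hσ z).mp hz
    have h1 := hxz ⟨z, hzT⟩ hzσ
    have hxC : c x.1 ∈ C := Finset.mem_image.mpr ⟨x.1, (hσ _).mpr ⟨x.2, hx⟩, rfl⟩
    simp only [y, hxC, if_true, hzm] at h1
    omega
  have hCI : C.card ≤ Fintype.card I := Finset.card_le_univ C
  rw [Finset.sum_add_distrib, Finset.sum_const, smul_eq_mul, mul_one] at hsum
  have hdecomp : ∀ x ∈ σ, ∑ i ∈ C, (x i - m i) + ∑ i ∈ Cᶜ, x i ≤ Fintype.card I := by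
    intro x hx
    have h1 : ∑ i, x i = N := (hTmem x).mp ((hσ x).mp hx).1
    rw [← Finset.sum_add_sum_compl C] at h1
    have h2 : ∑ i ∈ C, (x i - m i) + ∑ i ∈ C, m i = ∑ i ∈ C, x i := by
      rw [← Finset.sum_add_distrib]
      exact Finset.sum_congr rfl fun i _ => Nat.sub_add_cancel (hm x hx i)
    omega
  have hC : ∀ x ∈ σ, ∀ i ∉ C, x i ≤ Fintype.card I := by
    intro x hx i hi
    have h1 := Finset.single_le_sum (f := x) (fun _ _ => Nat.zero_le _)
      (Finset.mem_compl.mpr hi)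
    have := hdecomp x hx
    omega
  refine ⟨σ, hσne, fun x hx => (hTmem x).mp ((hσ x).mp hx).1, fun x hx i hi => ?_,
    fun x hx y hy i => ?_⟩
  · refine hC x hx i fun h => ?_
    obtain ⟨z, hz, hzi⟩ := Finset.mem_image.mp h
    exact hi z hz hzi
  · by_cases hi : i ∈ C
    · have h1 := Finset.single_le_sum (f := fun i => x i - m i) (fun _ _ => Nat.zero_le _) hi
      have h2 := hdecomp x hx
      have h3 := hm y hy i
      have h4 : x i - m i ≤ ∑ i ∈ C, (x i - m i) := h1
      omega
    · have := hC x hx i hi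
      omega

/-- The Poincaré–Miranda theorem on the unit cube. The cube is placed inside the simplex
`t ≥ 0, ∑ i, t i ≤ 2 * p`, whose slack coordinate is indexed by `none`. -/
theorem poincare_miranda {p : ℕ} (ψ : (Fin p → ℝ) → Fin p → ℝ) (hψ : Continuous ψ)
    (h0 : ∀ t ∈ Set.Icc (0 : Fin p → ℝ) 1, ∀ i, t i = 0 → ψ t i ≤ 0)
    (h1 : ∀ t ∈ Set.Icc (0 : Fin p → ℝ) 1, ∀ i, t i = 1 → 0 ≤ ψ t i) :
    ∃ t ∈ Set.Icc (0 : Fin p → ℝ) 1, ∀ i, ψ t i = 0 := by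
  classical
  rcases Nat.eq_zero_or_pos p with rfl | hp
  · exact ⟨0, by simp [Set.mem_Icc], fun i => i.elim0⟩
  have : Nonempty (Fin p) := ⟨⟨0, hp⟩⟩
  -- Extend `ψ` to all of `ℝ^p`, strictly positively beyond the faces `t i = 1`.
  let proj : (Fin p → ℝ) → Fin p → ℝ := fun t i => max 0 (min 1 (t i))
  let Ψ : (Fin p → ℝ) → Fin p → ℝ := fun t i => ψ (proj t) i + max 0 (t i - 1)
  have hproj : ∀ t, proj t ∈ Set.Icc (0 : Fin p → ℝ) 1 := fun t =>
    ⟨fun i => le_max_left _ _, fun i => max_le zero_le_one (min_le_left _ _)⟩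
  have hprojc : Continuous proj := by fun_prop
  have hΨc : Continuous Ψ := by fun_prop
  have hΨ0 : ∀ t i, t i = 0 → Ψ t i ≤ 0 := by
    intro t i hi
    have := h0 (proj t) (hproj t) i (by simp [proj, hi])
    simpa [Ψ, hi] using this
  have hΨ1 : ∀ t i, 1 ≤ t i → t i - 1 ≤ Ψ t i := by
    intro t i hi
    have h2 := h1 (proj t) (hproj t) i (by simp [proj, hi])
    have h3 : t i - 1 ≤ max 0 (t i - 1) := le_max_right _ _
    simp only [Ψ]
    linarith
  let R : ℝ := 2 * p
  have hpR : (1 : ℝ) ≤ p := by exact_mod_cast hp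
  have hRpos : 0 < R := by simp only [R]; linarith
  let B : Set (Fin p → ℝ) := Set.Icc 0 (fun _ => R)
  have hB : IsCompact B := isCompact_Icc
  suffices happrox : ∀ ε > 0, ∃ t ∈ B, ∀ i, |Ψ t i| ≤ ε by
    obtain ⟨t, ht, hmin⟩ := hB.exists_isMinOn
      (f := fun t => ‖Ψ t‖) ⟨0, by simp [B, Set.mem_Icc, Pi.le_def, hRpos.le]⟩
      (hΨc.norm.continuousOn)
    have hz : ‖Ψ t‖ ≤ 0 := by
      refine le_of_forall_pos_le_add fun ε hε => ?_
      obtain ⟨s, hs, hsε⟩ := happrox ε hε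
      rw [zero_add]
      exact (hmin hs).trans ((pi_norm_le_iff_of_nonneg hε.le).mpr hsε)
    have hz' : ∀ i, Ψ t i = 0 := fun i => congrFun (norm_le_zero_iff.mp hz) i
    have ht1 : ∀ i, t i ≤ 1 := by
      intro i
      by_contra hcon
      have := hΨ1 t i (not_le.mp hcon).le
      rw [hz' i] at this
      linarith
    have hpt : proj t = t := by
      funext i
      simpa [proj, ht1 i] using ht.1 i
    refine ⟨t, ⟨ht.1, ht1⟩, fun i => ?_⟩
    have := hz' i
    simp only [Ψ, hpt] at this
    rwa [max_eq_left (by linarith [ht1 i]), add_zero] at this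
  intro ε' hε'
  obtain ⟨ε, hε, hεε', hε1⟩ : ∃ ε > 0, ε ≤ ε' ∧ ε < 1 / 2 :=
    ⟨min ε' (1 / 4), by positivity, min_le_left _ _, (min_le_right _ _).trans_lt (by norm_num)⟩
  obtain ⟨δ, hδ, hunif⟩ := Metric.uniformContinuousOn_iff_le.mp
    (hB.uniformContinuousOn_of_continuous hΨc.continuousOn) ε hε
  have hunif' : ∀ s ∈ B, ∀ t ∈ B, (∀ i, |s i - t i| ≤ δ) → ∀ i, Ψ s i ≤ Ψ t i + ε := by
    intro s hs t ht hst i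
    have h2 := hunif s hs t ht ((dist_pi_le_iff hδ.le).mpr fun i => by
      rw [Real.dist_eq]; exact hst i)
    have h3 := (dist_le_pi_dist (Ψ s) (Ψ t) i).trans h2
    rw [Real.dist_eq] at h3
    linarith [le_abs_self (Ψ s i - Ψ t i)]
  -- A grid so fine that the points given by `grid_colors` are `δ`-close.
  obtain ⟨N, hN⟩ := exists_nat_gt (R * (p + 1) / min δ (1 / 2))
  have hδ' : 0 < min δ (1 / 2) := by positivity
  have hNpos : (0 : ℝ) < N := lt_of_le_of_lt (by positivity) hN
  have hfine : R / N * (p + 1) ≤ min δ (1 / 2) := by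
    rw [div_lt_iff₀ hδ'] at hN
    rw [div_mul_eq_mul_div, div_le_iff₀ hNpos]
    linarith
  let pt : (Option (Fin p) → ℕ) → Fin p → ℝ := fun x i => R / N * x (some i)
  -- Colour `some i` requires `Ψ i ≤ 0`; the colour `none` is used where all `Ψ i` are positive.
  let c : (Option (Fin p) → ℕ) → Option (Fin p) := fun x =>
    if h : ∃ i, Ψ (pt x) i ≤ 0 then some h.choose else none
  have hcs : ∀ x i, c x = some i → Ψ (pt x) i ≤ 0 := by
    intro x i hx
    simp only [c] at hx
    split_ifs at hx with h
    have := h.choose_spec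
    rwa [Option.some.inj hx] at this
  have hcn : ∀ x, c x = none → ∀ i, 0 < Ψ (pt x) i := by
    intro x hx
    simp only [c] at hx
    split_ifs at hx with h
    push Not at h
    exact h
  obtain ⟨σ, ⟨x, hx⟩, hsum, hsmall, hclose⟩ := grid_colors (I := Option (Fin p)) N c
  have hcard : (Fintype.card (Option (Fin p)) : ℝ) = p + 1 := by simp
  have hRN : 0 ≤ R / N := by positivity
  have hptB : ∀ x ∈ σ, pt x ∈ B := by
    intro x hx
    refine ⟨fun i => by simp only [pt, Pi.zero_apply]; positivity, fun i => ?_⟩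
    have h2 : x (some i) ≤ N := by
      rw [← hsum x hx]
      exact Finset.single_le_sum (fun _ _ => Nat.zero_le _) (Finset.mem_univ _)
    have h3 : (x (some i) : ℝ) ≤ N := by exact_mod_cast h2
    simp only [pt]
    calc R / N * x (some i) ≤ R / N * N := by gcongr
      _ = R := by field_simp
  have hptclose : ∀ x ∈ σ, ∀ y ∈ σ, ∀ i, |pt x i - pt y i| ≤ δ := by
    have aux : ∀ x ∈ σ, ∀ y ∈ σ, ∀ i, pt x i - pt y i ≤ δ := by
      intro x hx y hy i
      have h2 : ((x (some i) : ℕ) : ℝ) ≤ y (some i) + (p + 1) := by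
        rw [← hcard]
        exact_mod_cast hclose x hx y hy (some i)
      have h3 := mul_le_mul_of_nonneg_left h2 hRN
      have h4 := hfine.trans (min_le_left _ _)
      simp only [pt]
      linarith
    intro x hx y hy i
    exact abs_le.mpr ⟨by linarith [aux y hy x hx i], aux x hx y hy i⟩
  have htiny : ∀ k, (∀ z ∈ σ, c z ≠ k) → R / N * x k ≤ min δ (1 / 2) := by
    intro k hk
    refine le_trans ?_ hfine
    have h2 : ((x k : ℕ) : ℝ) ≤ p + 1 := by
      rw [← hcard]
      exact_mod_cast hsmall x hx k hk
    gcongr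
  have hupper : ∀ i, Ψ (pt x) i ≤ ε := by
    intro i
    by_cases hi : ∃ z ∈ σ, c z = some i
    · obtain ⟨z, hz, hzi⟩ := hi
      have h2 := hunif' _ (hptB x hx) _ (hptB z hz) (hptclose x hx z hz) i
      linarith [hcs z i hzi]
    · push Not at hi
      have h2 : pt x i ≤ δ := (htiny _ hi).trans (min_le_left _ _)
      have h3 := (hptB x hx).1 i
      -- Compare with the point obtained by setting the small coordinate to zero.
      have h4 := hunif' (pt x) (hptB x hx) (Function.update (pt x) i 0) ⟨fun j => by
          by_cases hj : j = i
          · subst hj; simp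
          · rw [Function.update_of_ne hj]; exact (hptB x hx).1 j, fun j => by
          by_cases hj : j = i
          · subst hj; simp [hRpos.le]
          · rw [Function.update_of_ne hj]; exact (hptB x hx).2 j⟩ (fun j => by
          by_cases hj : j = i
          · subst hj
            rw [Function.update_self, sub_zero, abs_of_nonneg h3]
            exact h2
          · rw [Function.update_of_ne hj, sub_self, abs_zero]; exact hδ.le) i
      linarith [hΨ0 (Function.update (pt x) i 0) i (by simp)]
  refine ⟨pt x, hptB x hx, fun i => abs_le.mpr ⟨?_, (hupper i).trans hεε'⟩⟩
  by_cases hn : ∃ z ∈ σ, c z = none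
  · obtain ⟨z, hz, hzn⟩ := hn
    have h2 := hunif' _ (hptB z hz) _ (hptB x hx) (hptclose z hz x hx) i
    linarith [hcn z hzn i]
  · -- Otherwise the coordinates add up to almost `2 * p`, so one of them is at least `3 / 2`.
    exfalso
    push Not at hn
    have h2 := (htiny none hn).trans (min_le_right _ _)
    have h3 : (x none : ℝ) + ∑ i, (x (some i) : ℝ) = N := by
      rw [← hsum x hx, Fintype.sum_option]
      push_cast
      rfl
    have h4 : R / N * x none + ∑ i, pt x i = R := by
      simp only [pt]
      rw [← Finset.mul_sum, ← mul_add, h3]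
      field_simp
    have h5 : ∃ i, 3 / 2 ≤ pt x i := by
      by_contra hcon
      push Not at hcon
      have h6 : ∑ i, pt x i < ∑ _i : Fin p, (3 / 2 : ℝ) :=
        Finset.sum_lt_sum_of_nonempty Finset.univ_nonempty fun i _ => hcon i
      simp only [Finset.sum_const, Finset.card_univ, Fintype.card_fin, nsmul_eq_mul] at h6
      simp only [R] at h4 h2
      linarith
    obtain ⟨j, hj⟩ := h5
    have h6 := hΨ1 (pt x) j (by linarith)
    linarith [hupper j]

/-! ### Stationarity conditions -/

/-- The conditions on weak multipliers are linear once the gradient coefficient of `f` is fixed to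
be one. -/
lemma weakMult_convex (f : Rn n → ℝ) (g : Fin l → Rn n → ℝ) (h : Fin m → Rn n → ℝ)
    (G H : Fin p → Rn n → ℝ) (xb : Rn n) :
    Convex ℝ {z : (Fin l → ℝ) × (Fin m → ℝ) × (Fin p → ℝ) × (Fin p → ℝ) |
      MpvcWeakMult f g h G H xb z.1 z.2.1 z.2.2.1 z.2.2.2} := by
  rintro ⟨l1, e1, m1, n1⟩ ⟨z1, z2, z3, z4, z5, z6, z7⟩ ⟨l2, e2, m2, n2⟩
    ⟨y1, y2, y3, y4, y5, y6, y7⟩ a b ha hb hab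
  refine ⟨?_, fun i hi => ?_, fun i hi => ?_, fun i hi => ?_, fun i hi => ?_, fun i hi => ?_,
    fun i hi hi' => ?_⟩
  · have hcomb := congrArg₂ (fun u v : Rn n => a • u + b • v) z1 y1
    simp only [smul_zero, add_zero] at hcomb
    rw [← hcomb]
    simp only [Prod.fst_add, Prod.snd_add, Prod.smul_fst, Prod.smul_snd, Pi.add_apply,
      Pi.smul_apply, smul_eq_mul, add_smul, mul_smul, Finset.sum_add_distrib, ← Finset.smul_sum]
    have hf : gradient f xb = a • gradient f xb + b • gradient f xb := by
      rw [← add_smul, hab, one_smul]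
    conv_lhs => rw [hf]
    module
  · have h1 := z2 i hi
    have h2 := y2 i hi
    simp only [Prod.fst_add, Prod.smul_fst, Pi.add_apply, Pi.smul_apply, smul_eq_mul]
    dsimp only at h1 h2
    positivity
  · have h1 := z3 i hi
    have h2 := y3 i hi
    dsimp only at h1 h2
    simp [h1, h2]
  · have h1 := z4 i hi
    have h2 := y4 i hi
    dsimp only at h1 h2
    simp [h1, h2]
  · have h1 := z5 i hi
    have h2 := y5 i hi
    simp only [Prod.fst_add, Prod.smul_fst, Prod.snd_add, Prod.smul_snd, Pi.add_apply,
      Pi.smul_apply, smul_eq_mul]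
    dsimp only at h1 h2
    positivity
  · have h1 := z6 i hi
    have h2 := y6 i hi
    dsimp only at h1 h2
    simp [h1, h2]
  · have h1 := z7 i hi hi'
    have h2 := y7 i hi hi'
    simp only [Prod.snd_add, Prod.smul_snd, Pi.add_apply,
      Pi.smul_apply, smul_eq_mul]
    dsimp only at h1 h2
    positivity

/-- Farkas' lemma on the branch `α` of the linearized cone; equality constraints contribute a
generator of each sign. -/
lemma aStat_of_linB (f : Rn n → ℝ) (g : Fin l → Rn n → ℝ) (h : Fin m → Rn n → ℝ)
    (G H : Fin p → Rn n → ℝ) (xb : Rn n)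
    (hB : -gradient f xb ∈ polarCone (MpvcLinCone g h G H xb))
    (α : Fin p → ℝ) (hα : IsBinaryVec α) : MpvcAStat f g h G H xb α := by
  classical
  -- Switches selecting the sign conditions of the branch; a generator that is switched off is `0`.
  let sg : Fin l → ℝ := fun i => if g i xb = 0 then 1 else 0
  let sG : Fin p → ℝ := fun i => if G i xb = 0 ∧ (H i xb = 0 → α i = 1) then 1 else 0
  let sHp : Fin p → ℝ := fun i => if H i xb = 0 then 1 else 0
  let sHm : Fin p → ℝ := fun i =>
    if H i xb = 0 ∧ (0 < G i xb ∨ (G i xb = 0 ∧ α i = 0)) then 1 else 0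
  let a : Fin l ⊕ (Fin m ⊕ Fin m) ⊕ Fin p ⊕ (Fin p ⊕ Fin p) → Rn n :=
    Sum.elim (fun i => sg i • gradient (g i) xb)
      (Sum.elim (Sum.elim (fun i => gradient (h i) xb) (fun i => -gradient (h i) xb))
        (Sum.elim (fun i => sG i • gradient (G i) xb)
          (Sum.elim (fun i => -(sHp i • gradient (H i) xb)) (fun i => sHm i • gradient (H i) xb))))
  obtain ⟨y, hy, hsum⟩ := farkas_inner Finset.univ a (-gradient f xb) (by
    intro v hv
    refine hB v ?_
    have v1 : ∀ i, sg i * ⟪gradient (g i) xb, v⟫ ≤ 0 := fun i => by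
      simpa [a, real_inner_smul_left] using hv (Sum.inl i) (Finset.mem_univ _)
    have v2 : ∀ i, ⟪gradient (h i) xb, v⟫ ≤ 0 := fun i => by
      simpa [a] using hv (Sum.inr (Sum.inl (Sum.inl i))) (Finset.mem_univ _)
    have v3 : ∀ i, 0 ≤ ⟪gradient (h i) xb, v⟫ := fun i => by
      simpa [a] using hv (Sum.inr (Sum.inl (Sum.inr i))) (Finset.mem_univ _)
    have v4 : ∀ i, sG i * ⟪gradient (G i) xb, v⟫ ≤ 0 := fun i => by
      simpa [a, real_inner_smul_left] using hv (Sum.inr (Sum.inr (Sum.inl i))) (Finset.mem_univ _)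
    have v5 : ∀ i, 0 ≤ sHp i * ⟪gradient (H i) xb, v⟫ := fun i => by
      simpa [a, real_inner_smul_left] using
        hv (Sum.inr (Sum.inr (Sum.inr (Sum.inl i)))) (Finset.mem_univ _)
    have v6 : ∀ i, sHm i * ⟪gradient (H i) xb, v⟫ ≤ 0 := fun i => by
      simpa [a, real_inner_smul_left] using
        hv (Sum.inr (Sum.inr (Sum.inr (Sum.inr i)))) (Finset.mem_univ _)
    refine ⟨fun i hi => ?_, fun i => le_antisymm (v2 i) (v3 i), fun i hi hi' => ?_,
      fun i hi hi' => ?_, fun i hi => ?_, fun i hi hi' => ?_⟩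
    · simpa [sg, hi] using v1 i
    · simpa [sG, hi, hi'.ne'] using v4 i
    · have w1 := v5 i
      have w2 := v6 i
      simp only [sHp, sHm, hi, hi', true_or, and_self, if_true, one_mul] at w1 w2
      exact le_antisymm w2 w1
    · have hH : H i xb = 0 := by tauto
      simpa [sHp, hH] using v5 i
    · have w1 := v5 i
      simp only [sHp, hi', if_true, one_mul] at w1
      rcases hα i with hα0 | hα1
      · have w2 := v6 i
        simp only [sHm, hi, hi', hα0, lt_irrefl, and_self, or_true, if_true, one_mul] at w2
        rw [le_antisymm w2 w1, mul_zero]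
      · have w2 := v4 i
        simp only [sG, hi, hα1, implies_true, and_self, if_true, one_mul] at w2
        exact mul_nonpos_of_nonpos_of_nonneg w2 w1)
  have hsgn : ∀ i, 0 ≤ sg i := fun i => by simp only [sg]; split_ifs <;> norm_num
  have hsGn : ∀ i, 0 ≤ sG i := fun i => by simp only [sG]; split_ifs <;> norm_num
  have hsHpn : ∀ i, 0 ≤ sHp i := fun i => by simp only [sHp]; split_ifs <;> norm_num
  refine ⟨fun i => y (Sum.inl i) * sg i,
    fun i => y (Sum.inr (Sum.inl (Sum.inl i))) - y (Sum.inr (Sum.inl (Sum.inr i))),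
    fun i => y (Sum.inr (Sum.inr (Sum.inl i))) * sG i,
    fun i => y (Sum.inr (Sum.inr (Sum.inr (Sum.inl i)))) * sHp i
      - y (Sum.inr (Sum.inr (Sum.inr (Sum.inr i)))) * sHm i,
    ⟨?_, fun i hi => mul_nonneg (hy _) (hsgn i), fun i hi => ?_, fun i hi => ?_,
      fun i hi => mul_nonneg (hy _) (hsGn i), fun i hi => ?_, fun i hi hi' => ?_⟩,
    fun i hi hi' hi'' => ?_, fun i hi hi' hi'' => ?_⟩
  · have hf : gradient f xb = -∑ j, y j • a j := by rw [← hsum, neg_neg]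
    rw [hf]
    simp only [a, Fintype.sum_sum_type, Sum.elim_inl, Sum.elim_inr, smul_neg, smul_smul,
      sub_smul, Finset.sum_sub_distrib, Finset.sum_neg_distrib]
    abel
  · simp [sg, hi]
  · have : G i xb ≠ 0 := by
      rcases hi with hi | hi | hi
      exacts [hi.1.ne', hi.1.ne, hi.1.ne]
    simp [sG, this]
  · have : H i xb ≠ 0 := by
      rcases hi with hi | hi
      exacts [hi.2.ne', hi.2.ne']
    simp [sHp, sHm, this]
  · have hm0 : sHm i = 0 := by
      simp only [sHm]
      rw [if_neg]
      rintro ⟨-, h1 | h1⟩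
      · linarith
      · linarith [h1.1]
    dsimp only
    rw [hm0, mul_zero, sub_zero]
    exact mul_nonneg (hy _) (hsHpn i)
  · simp [sG, hi, hi', hi'']
  · have hm0 : sHm i = 0 := by simp [sHm, hi, hi'']
    dsimp only
    rw [hm0, mul_zero, sub_zero]
    exact mul_nonneg (hy _) (hsHpn i)

/-- Every direction of the linearized cone lies in some branch `α`, on which `A_α`-multipliers
certify that the pairing with `-∇f` is nonpositive. -/
lemma linB_of_aStat (f : Rn n → ℝ) (g : Fin l → Rn n → ℝ) (h : Fin m → Rn n → ℝ)
    (G H : Fin p → Rn n → ℝ) (xb : Rn n) (hfeas : xb ∈ MpvcFeasible g h G H)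
    (hA : ∀ α : Fin p → ℝ, IsBinaryVec α → MpvcAStat f g h G H xb α) :
    -gradient f xb ∈ polarCone (MpvcLinCone g h G H xb) := by
  classical
  rintro v ⟨v1, v2, v3, v4, v5, v6⟩
  -- `α` selects a branch of the linearized cone that contains `v`.
  obtain ⟨lam, eta, mu, nu, ⟨w1, w2, w3, w4, w5, w6, w7⟩, hmu, hnu⟩ :=
    hA (fun i => if ⟪gradient (G i) xb, v⟫ ≤ 0 then 1 else 0) (fun i => by
      dsimp only; split_ifs <;> simp)
  obtain ⟨-, -, hH, hGH⟩ := hfeas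
  have hf : -gradient f xb = ∑ i, lam i • gradient (g i) xb + ∑ i, eta i • gradient (h i) xb
      + ∑ i, mu i • gradient (G i) xb - ∑ i, nu i • gradient (H i) xb := by
    rw [eq_comm, ← sub_eq_zero, ← w1]
    abel
  rw [hf, inner_sub_left, inner_add_left, inner_add_left, sum_inner, sum_inner, sum_inner,
    sum_inner]
  simp only [real_inner_smul_left, v2, mul_zero, Finset.sum_const_zero, add_zero]
  have t1 : ∑ i, lam i * ⟪gradient (g i) xb, v⟫ ≤ 0 := Finset.sum_nonpos fun i _ => by
    by_cases hi : g i xb = 0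
    · exact mul_nonpos_of_nonneg_of_nonpos (w2 i hi) (v1 i hi)
    · rw [w3 i hi, zero_mul]
  have t2 : ∑ i, mu i * ⟪gradient (G i) xb, v⟫ ≤ 0 := Finset.sum_nonpos fun i _ => by
    rcases (hH i).eq_or_lt with hHi | hHi
    · rcases lt_trichotomy (G i xb) 0 with hGi | hGi | hGi
      · rw [w4 i (Or.inr (Or.inl ⟨hGi, hHi.symm⟩)), zero_mul]
      · by_cases hc : ⟪gradient (G i) xb, v⟫ ≤ 0
        · exact mul_nonpos_of_nonneg_of_nonpos (w5 i (Or.inr ⟨hGi, hHi.symm⟩)) hc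
        · rw [hmu i hGi hHi.symm (if_neg hc), zero_mul]
      · rw [w4 i (Or.inl ⟨hGi, hHi.symm⟩), zero_mul]
    · rcases lt_trichotomy (G i xb) 0 with hGi | hGi | hGi
      · rw [w4 i (Or.inr (Or.inr ⟨hGi, hHi⟩)), zero_mul]
      · exact mul_nonpos_of_nonneg_of_nonpos (w5 i (Or.inl ⟨hGi, hHi⟩)) (v3 i hGi hHi)
      · exact absurd (hGH i) (not_le.mpr (mul_pos hGi hHi))
  have t3 : 0 ≤ ∑ i, nu i * ⟪gradient (H i) xb, v⟫ := Finset.sum_nonneg fun i _ => by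
    rcases (hH i).eq_or_lt with hHi | hHi
    · rcases lt_trichotomy (G i xb) 0 with hGi | hGi | hGi
      · exact mul_nonneg (w7 i hGi hHi.symm) (v5 i (Or.inr ⟨hGi, hHi.symm⟩))
      · have hv := v5 i (Or.inl ⟨hGi, hHi.symm⟩)
        by_cases hc : ⟪gradient (G i) xb, v⟫ ≤ 0
        · exact mul_nonneg (hnu i hGi hHi.symm (if_pos hc)) hv
        · have hz : ⟪gradient (H i) xb, v⟫ = 0 :=
            le_antisymm (nonpos_of_mul_nonpos_right (v6 i hGi hHi.symm) (not_le.mp hc)) hv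
          rw [hz, mul_zero]
      · rw [v4 i hGi hHi.symm, mul_zero]
    · rcases lt_trichotomy (G i xb) 0 with hGi | hGi | hGi
      · rw [w6 i (Or.inr ⟨hGi, hHi⟩), zero_mul]
      · rw [w6 i (Or.inl ⟨hGi, hHi⟩), zero_mul]
      · exact absurd (hGH i) (not_le.mpr (mul_pos hGi hHi))
  linarith

/-- The multilinear weight of the cube vertex `β` at the point `t`. -/
def cubeWeight (t : Fin p → ℝ) (β : Fin p → Bool) : ℝ := ∏ i, if β i then t i else 1 - t i

lemma cubeWeight_sum (t : Fin p → ℝ) : ∑ β, cubeWeight t β = 1 := by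
  have := (Fintype.prod_sum (fun (i : Fin p) (b : Bool) => if b then t i else 1 - t i)).symm
  simpa [cubeWeight] using this

/-- Multilinear interpolation of the `A_α`-multipliers over the cube, followed by
Poincaré–Miranda. -/
lemma cStat_of_aStat (f : Rn n → ℝ) (g : Fin l → Rn n → ℝ) (h : Fin m → Rn n → ℝ)
    (G H : Fin p → Rn n → ℝ) (xb : Rn n)
    (hA : ∀ α : Fin p → ℝ, IsBinaryVec α → MpvcAStat f g h G H xb α)
    (d : Fin p → ℝ) (hd : IsUnitIntervalVec d) : MpvcCStat f g h G H xb d := by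
  classical
  have hA' : ∀ β : Fin p → Bool,
      ∃ z : (Fin l → ℝ) × (Fin m → ℝ) × (Fin p → ℝ) × (Fin p → ℝ),
        MpvcWeakMult f g h G H xb z.1 z.2.1 z.2.2.1 z.2.2.2 ∧
        (∀ i, G i xb = 0 → H i xb = 0 → β i = false → z.2.2.1 i = 0) ∧
        (∀ i, G i xb = 0 → H i xb = 0 → β i = true → 0 ≤ z.2.2.2 i) := by
    intro β
    obtain ⟨lam, eta, mu, nu, hw, hmu, hnu⟩ := hA (fun i => if β i then 1 else 0)
      (fun i => by dsimp only; split_ifs <;> simp)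
    exact ⟨(lam, eta, mu, nu), hw, fun i h1 h2 h3 => hmu i h1 h2 (by simp [h3]),
      fun i h1 h2 h3 => hnu i h1 h2 (by simp [h3])⟩
  choose z hzw hz0 hz1 using hA'
  let Z : (Fin p → ℝ) → (Fin l → ℝ) × (Fin m → ℝ) × (Fin p → ℝ) × (Fin p → ℝ) :=
    fun t => ∑ β, cubeWeight t β • z β
  have hwn : ∀ t ∈ Set.Icc (0 : Fin p → ℝ) 1, ∀ β, 0 ≤ cubeWeight t β := by
    intro t ht β
    refine Finset.prod_nonneg fun i _ => ?_
    have h1 : 0 ≤ t i := ht.1 i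
    have h2 : t i ≤ 1 := ht.2 i
    split_ifs <;> linarith
  have hZw : ∀ t ∈ Set.Icc (0 : Fin p → ℝ) 1,
      MpvcWeakMult f g h G H xb (Z t).1 (Z t).2.1 (Z t).2.2.1 (Z t).2.2.2 := fun t ht =>
    (weakMult_convex f g h G H xb).sum_mem (fun β _ => hwn t ht β) (cubeWeight_sum t)
      (fun β _ => hzw β)
  have hmu : ∀ t i, (Z t).2.2.1 i = ∑ β, cubeWeight t β * (z β).2.2.1 i := by
    intro t i
    simp [Z, Prod.snd_sum, Prod.fst_sum]
  have hnu : ∀ t i, (Z t).2.2.2 i = ∑ β, cubeWeight t β * (z β).2.2.2 i := by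
    intro t i
    simp [Z, Prod.snd_sum]
  have hwc : ∀ β, Continuous fun t : Fin p → ℝ => cubeWeight t β := by
    intro β
    unfold cubeWeight
    refine continuous_finsetProd _ fun i _ => ?_
    split_ifs <;> fun_prop
  have hZc : Continuous Z :=
    continuous_finsetSum _ fun β _ => (hwc β).smul continuous_const
  -- On `I^{00}` a zero of the `i`-th component is exactly the complementarity required by `d`.
  let ψ : (Fin p → ℝ) → Fin p → ℝ := fun t i =>
    if G i xb = 0 ∧ H i xb = 0 then
      min ((Z t).2.2.1 i) ((1 - d i) * (Z t).2.2.1 i + d i * (Z t).2.2.2 i) else 0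
  have hψc : Continuous ψ := by
    refine continuous_pi fun i => ?_
    simp only [ψ]
    split_ifs <;> fun_prop
  obtain ⟨t, ht, hzero⟩ := poincare_miranda ψ hψc (by
    intro t ht i hti
    simp only [ψ]
    split_ifs with hi
    · refine (min_le_left _ _).trans (le_of_eq ?_)
      rw [hmu]
      refine Finset.sum_eq_zero fun β _ => ?_
      rcases hβ : β i with _ | _
      · rw [hz0 β i hi.1 hi.2 hβ, mul_zero]
      · have : cubeWeight t β = 0 :=
          Finset.prod_eq_zero (Finset.mem_univ i) (by simp [hβ, hti])
        rw [this, zero_mul]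
    · exact le_rfl) (by
    intro t ht i hti
    simp only [ψ]
    split_ifs with hi
    · have h1 : 0 ≤ (Z t).2.2.1 i := (hZw t ht).2.2.2.2.1 i (Or.inr hi)
      have h2 : 0 ≤ (Z t).2.2.2 i := by
        rw [hnu]
        refine Finset.sum_nonneg fun β _ => ?_
        rcases hβ : β i with _ | _
        · have : cubeWeight t β = 0 :=
            Finset.prod_eq_zero (Finset.mem_univ i) (by simp [hβ, hti])
          rw [this, zero_mul]
        · exact mul_nonneg (hwn t ht β) (hz1 β i hi.1 hi.2 hβ)
      have h3 : 0 ≤ d i := (hd i).1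
      have h4 : 0 ≤ 1 - d i := sub_nonneg.mpr (hd i).2
      exact le_min h1 (by positivity)
    · exact le_rfl)
  refine ⟨(Z t).1, (Z t).2.1, (Z t).2.2.1, (Z t).2.2.2, hZw t ht, fun i hG hH => ?_⟩
  have hzi := hzero i
  simp only [ψ, hG, hH, and_self, if_true] at hzi
  have h3 : 0 ≤ d i := (hd i).1
  rcases min_choice ((Z t).2.2.1 i) ((1 - d i) * (Z t).2.2.1 i + d i * (Z t).2.2.2 i) with hc | hc
  · rw [hc] at hzi
    rcases h3.eq_or_lt with h0 | hpos
    · right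
      rw [hzi, ← h0]
      ring
    · left
      have h5 := min_eq_left_iff.mp hc
      rw [hzi, mul_zero, zero_add] at h5
      exact ⟨hzi, nonneg_of_mul_nonneg_right h5 hpos⟩
  · right
    rw [hc] at hzi
    linarith

/-- equivalence of linearized B-stationarity, A_α-stationarity for
all α, C_d-stationarity for all d, and P_α-stationarity for all α (MPVC). -/
theorem mpvc_stat_tfae {n l m p : ℕ} (f : Rn n → ℝ) (g : Fin l → Rn n → ℝ)
    (h : Fin m → Rn n → ℝ) (G H : Fin p → Rn n → ℝ) (xb : Rn n)
    (hf : Differentiable ℝ f) (hg : ∀ i, Differentiable ℝ (g i))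
    (hh : ∀ i, Differentiable ℝ (h i)) (hG : ∀ i, Differentiable ℝ (G i))
    (hH : ∀ i, Differentiable ℝ (H i))
    (hfeas : xb ∈ MpvcFeasible g h G H) :
    List.TFAE
      [(-gradient f xb ∈ polarCone (MpvcLinCone g h G H xb)),
       (∀ α : Fin p → ℝ, IsBinaryVec α → MpvcAStat f g h G H xb α),
       (∀ d : Fin p → ℝ, IsUnitIntervalVec d → MpvcCStat f g h G H xb d),
       (∀ α : Fin p → ℝ, IsBinaryVec α → MpvcPStat f g h G H xb α)] := by
  tfae_have 1 → 2 := fun h1 α hα => aStat_of_linB f g h G H xb h1 α hα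
  tfae_have 2 → 1 := linB_of_aStat f g h G H xb hfeas
  tfae_have 2 → 3 := fun h2 d hd => cStat_of_aStat f g h G H xb h2 d hd
  tfae_have 3 → 4 := by
    intro h3 α hα
    obtain ⟨lam, eta, mu, nu, hw, hC⟩ := h3 α fun i => by rcases hα i with h | h <;> simp [h]
    refine ⟨lam, eta, mu, nu, hw, fun i hG hH h0 => ?_, fun i hG hH h1 => ?_⟩
    · rcases hC i hG hH with hc | hc
      · exact hc.1
      · simpa [h0] using hc
    · refine (hC i hG hH).imp id fun hc => ?_
      simpa [h1] using hc
  tfae_have 4 → 2 := by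
    intro h4 α hα
    obtain ⟨lam, eta, mu, nu, hw, h0, h1⟩ := h4 α hα
    refine ⟨lam, eta, mu, nu, hw, h0, fun i hG hH hi => ?_⟩
    rcases h1 i hG hH hi with hc | hc
    exacts [hc.2, hc.ge]
  tfae_finish
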